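/- For every r > √2, a(r) = −4 sin²(πr²/2) ∫_{0}^{i∞} φ0(−1/z) z² e^{πir²z} dz; equivalently, a(r) = 4i · sin²(πr²/2) ∫_{0}^{∞} φ0(i/t) t² e^{−πr²t} dt, and this integral converges absolutely for r > √2. -/

import Mathlib

open MeasureTheory

/-- Weight 2 Eisenstein series (quasimodular), via its `q`-expansion. -/
noncomputable def E2 (z : ℂ) : ℂ :=
  1 - 24 * ∑' n : ℕ+, ((ArithmeticFunction.sigma 1 n : ℕ) : ℂ) *
    Complex.exp (2 * (Real.pi : ℂ) * Complex.I * n * z)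

/-- Weight 4 Eisenstein series, via its `q`-expansion. -/
noncomputable def E4 (z : ℂ) : ℂ :=
  1 + 240 * ∑' n : ℕ+, ((ArithmeticFunction.sigma 3 n : ℕ) : ℂ) *
    Complex.exp (2 * (Real.pi : ℂ) * Complex.I * n * z)

/-- Weight 6 Eisenstein series, via its `q`-expansion. -/
noncomputable def E6 (z : ℂ) : ℂ :=
  1 - 504 * ∑' n : ℕ+, ((ArithmeticFunction.sigma 5 n : ℕ) : ℂ) *
    Complex.exp (2 * (Real.pi : ℂ) * Complex.I * n * z)

/-- The elliptic `j`-invariant. -/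
noncomputable def jInv (z : ℂ) : ℂ := 1728 * E4 z ^ 3 / (E4 z ^ 3 - E6 z ^ 2)

/-- The weakly holomorphic modular form `varphi_{-2}`. -/
noncomputable def varphim2 (z : ℂ) : ℂ := -1728 * E4 z * E6 z / (E4 z ^ 3 - E6 z ^ 2)

/-- The weakly holomorphic modular form `varphi_{-4}`. -/
noncomputable def varphim4 (z : ℂ) : ℂ := 1728 * E4 z ^ 2 / (E4 z ^ 3 - E6 z ^ 2)

/-- `φ_{-4} = varphi_{-4}`. -/
noncomputable def phim4 (z : ℂ) : ℂ := varphim4 z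

/-- `φ_{-2} = varphi_{-4}·E2 + varphi_{-2}`. -/
noncomputable def phim2 (z : ℂ) : ℂ := varphim4 z * E2 z + varphim2 z

/-- `φ_0 = varphi_{-4}·E2² + 2·varphi_{-2}·E2 + j − 1728`. -/
noncomputable def phi0 (z : ℂ) : ℂ :=
  varphim4 z * E2 z ^ 2 + 2 * varphim2 z * E2 z + jInv z - 1728
/-- Contour integral of `F` along the straight-line segment from `z₁` to `z₂`. -/
noncomputable def segInt (z₁ z₂ : ℂ) (F : ℂ → ℂ) : ℂ :=
  (z₂ - z₁) * ∫ t in (0:ℝ)..1, F (z₁ + (t : ℂ) * (z₂ - z₁))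

/-- Contour integral of `F` along the vertical ray from `c·i` to `i∞`. -/
noncomputable def rayIntFrom (c : ℝ) (F : ℂ → ℂ) : ℂ :=
  Complex.I * ∫ t in Set.Ioi c, F (Complex.I * (t : ℂ))
/-- The radial profile of the `+1`-eigenfunction `a`: the value of `a` on vectors of norm `r`. -/
noncomputable def aRad (r : ℝ) : ℂ :=
  segInt (-1) Complex.I
      (fun z => phi0 (-1/(z+1)) * (z+1)^2 * Complex.exp ((Real.pi:ℂ) * Complex.I * (r:ℂ)^2 * z))
    + segInt 1 Complex.I
      (fun z => phi0 (-1/(z-1)) * (z-1)^2 * Complex.exp ((Real.pi:ℂ) * Complex.I * (r:ℂ)^2 * z))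
    - 2 * segInt 0 Complex.I
      (fun z => phi0 (-1/z) * z^2 * Complex.exp ((Real.pi:ℂ) * Complex.I * (r:ℂ)^2 * z))
    + 2 * rayIntFrom 1 (fun z => phi0 z * Complex.exp ((Real.pi:ℂ) * Complex.I * (r:ℂ)^2 * z))

/-- The radial function `a : ℝ⁸ → ℂ`. -/
noncomputable def aFn (x : EuclideanSpace ℝ (Fin 8)) : ℂ := aRad ‖x‖


section modular
open UpperHalfPlane hiding I
open Complex

lemma aux_E2 (τ : ℍ) : E2 τ = EisensteinSeries.E2 τ := by
  rw [EisensteinSeries.E2_eq_tsum_cexp, E2]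
  congr 2
  refine tsum_congr fun n => ?_
  rw [← Complex.exp_nat_mul]
  congr 2
  ring

lemma aux_E4 (τ : ℍ) : E4 τ = ModularForm.E₄ τ := by
  rw [EisensteinSeries.q_expansion_bernoulli _ ⟨2, rfl⟩, E4,
    show bernoulli 4 = -1 / 30 by decide +kernel]
  norm_num
  refine tsum_congr fun n => ?_
  rw [← Complex.exp_nat_mul]
  congr 2
  ring

lemma aux_E6 (τ : ℍ) : E6 τ = ModularForm.E₆ τ := by
  rw [EisensteinSeries.q_expansion_bernoulli _ ⟨3, rfl⟩, E6,
    show bernoulli 6 = 1 / 42 by decide +kernel]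
  norm_num
  refine tsum_congr fun n => ?_
  rw [← Complex.exp_nat_mul]
  congr 2
  ring

lemma aux_Delta (τ : ℍ) : E4 τ ^ 3 - E6 τ ^ 2 = 1728 * ModularForm.discriminant τ := by
  rw [ModularForm.discriminant_eq_E₄_cube_sub_E₆_sq, aux_E4, aux_E6]; ring

lemma aux_ne (z : ℂ) (hz : 0 < z.im) : E4 z ^ 3 - E6 z ^ 2 ≠ 0 := by
  have := aux_Delta ⟨z, hz⟩
  rw [show z = ((⟨z, hz⟩ : ℍ) : ℂ) from rfl, this]
  exact mul_ne_zero (by norm_num) (ModularForm.discriminant_ne_zero _)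

lemma aux_diff {f : ℂ → ℂ} {g : ℍ → ℂ} (h : ∀ τ : ℍ, f τ = g τ)
    (hg : DifferentiableOn ℂ (g ∘ ofComplex) {z | 0 < z.im}) :
    DifferentiableOn ℂ f {z | 0 < z.im} := by
  refine hg.congr fun z hz => ?_
  have := h ⟨z, hz⟩
  simp only [Function.comp, ofComplex_apply_of_im_pos hz]
  exact this

lemma diff_E2 : DifferentiableOn ℂ E2 {z | 0 < z.im} :=
  aux_diff aux_E2 (UpperHalfPlane.mdifferentiable_iff.mp E2_mdifferentiable)

lemma diff_E4 : DifferentiableOn ℂ E4 {z | 0 < z.im} :=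
  aux_diff aux_E4 (UpperHalfPlane.mdifferentiable_iff.mp ModularForm.E₄.holo')

lemma diff_E6 : DifferentiableOn ℂ E6 {z | 0 < z.im} :=
  aux_diff aux_E6 (UpperHalfPlane.mdifferentiable_iff.mp ModularForm.E₆.holo')

lemma phi0_eq (z : ℂ) (hz : 0 < z.im) :
    phi0 z = 1728 * (E2 z * E4 z - E6 z) ^ 2 / (E4 z ^ 3 - E6 z ^ 2) := by
  have := aux_ne z hz
  rw [phi0, varphim4, varphim2, jInv]
  field_simp
  ring

lemma diff_phi0 : DifferentiableOn ℂ phi0 {z | 0 < z.im} := by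
  have : DifferentiableOn ℂ
      (fun z => 1728 * (E2 z * E4 z - E6 z) ^ 2 / (E4 z ^ 3 - E6 z ^ 2)) {z | 0 < z.im} := by
    refine DifferentiableOn.div ?_ ?_ (fun z hz => aux_ne z hz)
    · exact ((((diff_E2.mul diff_E4).sub diff_E6).pow 2).const_mul _)
    · exact (diff_E4.pow 3).sub (diff_E6.pow 2)
  exact this.congr fun z hz => phi0_eq z hz

lemma aux_per (k : ℕ) (z : ℂ) :
    ∑' n : ℕ+, ((ArithmeticFunction.sigma k n : ℕ) : ℂ) *
      Complex.exp (2 * (Real.pi : ℂ) * Complex.I * n * (z + 1)) =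
    ∑' n : ℕ+, ((ArithmeticFunction.sigma k n : ℕ) : ℂ) *
      Complex.exp (2 * (Real.pi : ℂ) * Complex.I * n * z) := by
  refine tsum_congr fun n => ?_
  congr 1
  rw [Complex.exp_eq_exp_iff_exists_int]
  exact ⟨n, by push_cast; ring⟩

lemma E2_per (z : ℂ) : E2 (z + 1) = E2 z := by simp only [E2, aux_per]
lemma E4_per (z : ℂ) : E4 (z + 1) = E4 z := by simp only [E4, aux_per]
lemma E6_per (z : ℂ) : E6 (z + 1) = E6 z := by simp only [E6, aux_per]

lemma aux_S (τ : ℍ) : ((ModularGroup.S • τ : ℍ) : ℂ) = -1 / (τ : ℂ) := by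
  rw [UpperHalfPlane.modular_S_smul]
  simp [neg_div, one_div, inv_neg]

open scoped MatrixGroups in
open ModularForm in
lemma aux_form_S {F : ℂ → ℂ} {k : ℕ} (f : ModularForm 𝒮ℒ (k : ℤ)) (hF : ∀ τ : ℍ, F τ = f τ)
    (z : ℂ) (hz : 0 < z.im) : F (-1 / z) = z ^ k * F z := by
  set τ : ℍ := ⟨z, hz⟩
  have h := SlashInvariantForm.slash_S_apply f k τ
  have h2 : (⇑f ∣[(k:ℤ)] ModularGroup.S) = f :=
    SlashInvariantForm.slash_action_eqn f _ ⟨ModularGroup.S, rfl⟩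
  have hS : F (-1 / z) = f (ModularGroup.S • τ) := by
    rw [← hF, aux_S]
  have h0 : z ≠ 0 := τ.ne_zero
  rw [hS]
  rw [h2, ← hF] at h
  rw [← UpperHalfPlane.modular_S_smul] at *
  generalize f (ModularGroup.S • τ) = v at *
  rw [show F z = F τ from rfl, h, show (τ : ℂ) = z from rfl, zpow_neg, zpow_natCast]
  field_simp

lemma E4_S (z : ℂ) (hz : 0 < z.im) : E4 (-1 / z) = z ^ 4 * E4 z :=
  aux_form_S (k := 4) ModularForm.E₄ aux_E4 z hz

lemma E6_S (z : ℂ) (hz : 0 < z.im) : E6 (-1 / z) = z ^ 6 * E6 z :=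
  aux_form_S (k := 6) ModularForm.E₆ aux_E6 z hz

open ModularForm in
lemma E2_S (z : ℂ) (hz : 0 < z.im) :
    E2 (-1 / z) = z ^ 2 * E2 z + (6 / (Real.pi * I)) * z := by
  set τ : ℍ := ⟨z, hz⟩
  have h := SlashInvariantForm.slash_S_apply EisensteinSeries.E2 2 τ
  rw [EisensteinSeries.E2_slash_action] at h
  have hS : E2 (-1 / z) = EisensteinSeries.E2 (ModularGroup.S • τ) := by
    rw [← aux_E2, aux_S]
  have h0 : z ≠ 0 := τ.ne_zero
  have hpi : (Real.pi : ℂ) ≠ 0 := by exact_mod_cast Real.pi_ne_zero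
  rw [hS]
  rw [← UpperHalfPlane.modular_S_smul] at h
  generalize EisensteinSeries.E2 (ModularGroup.S • τ) = v at *
  simp only [Pi.sub_apply, Pi.smul_apply, EisensteinSeries.D2_S, ← aux_E2, riemannZeta_two,
    smul_eq_mul] at h
  rw [show (τ : ℂ) = z from rfl, zpow_neg, eq_mul_inv_iff_mul_eq₀ (by positivity)] at h
  rw [← h]
  have hI := Complex.I_sq
  field_simp
  norm_cast
  field_simp
  linear_combination (-6 : ℂ) * hI

/-- the shifted function -/
lemma phi0_S (z : ℂ) (hz : 0 < z.im) :
    phi0 (-1 / z) * z ^ 2 = 1728 * (z * (E2 z * E4 z - E6 z) + (6 / (Real.pi * I)) * E4 z) ^ 2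
      / (E4 z ^ 3 - E6 z ^ 2) := by
  have h0 : z ≠ 0 := by rintro rfl; simp at hz
  have him : 0 < (-1 / z).im := by
    have := (ModularGroup.S • (⟨z, hz⟩ : ℍ)).im_pos
    have h2 := aux_S ⟨z, hz⟩
    rw [← UpperHalfPlane.coe_im, h2] at this
    exact this
  rw [phi0_eq _ him, E2_S z hz, E4_S z hz, E6_S z hz]
  have h1 := aux_ne z hz
  have h2 : (z ^ 4 * E4 z) ^ 3 - (z ^ 6 * E6 z) ^ 2 = z ^ 12 * (E4 z ^ 3 - E6 z ^ 2) := by ring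
  rw [h2]
  generalize (6 / (Real.pi * I)) = c
  generalize (E4 z ^ 3 - E6 z ^ 2) = D at *
  field_simp
  ring

lemma phi0_second_diff (z : ℂ) (hz : 0 < z.im) :
    phi0 (-1 / (z + 1)) * (z + 1) ^ 2 + phi0 (-1 / (z - 1)) * (z - 1) ^ 2
      - 2 * (phi0 (-1 / z) * z ^ 2) = 2 * phi0 z := by
  rw [phi0_S z hz, phi0_S (z + 1) (by simpa using hz), phi0_S (z - 1) (by simpa using hz),
    phi0_eq z hz]
  have e2 := E2_per (z - 1)
  have e4 := E4_per (z - 1)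
  have e6 := E6_per (z - 1)
  rw [sub_add_cancel] at e2 e4 e6
  rw [← e2, ← e4, ← e6, E2_per, E4_per, E6_per, e2, e4, e6]
  ring

end modular

section bounds
open UpperHalfPlane hiding I
open Complex

lemma sum_bound (k : ℕ) : ∃ C : ℝ, 0 ≤ C ∧ ∀ z : ℂ, 1 ≤ z.im →
    ‖∑' n : ℕ+, ((ArithmeticFunction.sigma k n : ℕ) : ℂ) *
      Complex.exp (2 * (Real.pi : ℂ) * Complex.I * n * z)‖ ≤ C * Real.exp (-2 * Real.pi * z.im) := by
  have hs := (EisensteinSeries.summable_sigma_mul_cexp_pow (k := k + 1) (by omega)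
    UpperHalfPlane.I).norm
  have hs2 : Summable (fun n : ℕ+ => (ArithmeticFunction.sigma k n : ℝ) *
      Real.exp (-2 * Real.pi) ^ (n : ℕ)) := by
    have := hs.comp_injective PNat.coe_injective
    refine this.congr fun n => ?_
    simp [Complex.norm_exp]
  refine ⟨Real.exp (2 * Real.pi) * ∑' n : ℕ+, (ArithmeticFunction.sigma k n : ℝ) *
      Real.exp (-2 * Real.pi) ^ (n : ℕ), by positivity, fun z hz => ?_⟩
  have key : ∀ n : ℕ+, ‖((ArithmeticFunction.sigma k n : ℕ) : ℂ) *
      Complex.exp (2 * (Real.pi : ℂ) * Complex.I * n * z)‖ ≤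
      (Real.exp (2 * Real.pi) * Real.exp (-2 * Real.pi * z.im)) *
      ((ArithmeticFunction.sigma k n : ℝ) * Real.exp (-2 * Real.pi) ^ (n : ℕ)) := by
    intro n
    rw [norm_mul, Complex.norm_natCast, Complex.norm_exp]
    rw [← Real.exp_add, mul_left_comm, ← Real.exp_nat_mul, ← Real.exp_add]
    refine mul_le_mul_of_nonneg_left (Real.exp_le_exp.mpr ?_) (by positivity)
    have h1 : (1 : ℝ) ≤ (n : ℕ) := by exact_mod_cast n.pos
    have h2 : (2 * (Real.pi : ℂ) * Complex.I * n * z).re = -(2 * Real.pi * (n : ℕ) * z.im) := by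
      simp
    rw [h2]
    have hp := Real.pi_pos
    nlinarith [mul_nonneg (mul_nonneg hp.le (sub_nonneg.mpr h1)) (sub_nonneg.mpr hz)]
  refine (tsum_of_norm_bounded (hs2.mul_left _).hasSum key).trans (le_of_eq ?_)
  rw [tsum_mul_left]; ring

lemma disc_bound : ∃ A C : ℝ, 1 ≤ A ∧ 0 ≤ C ∧ ∀ z : ℂ, A ≤ z.im →
    ‖(E4 z ^ 3 - E6 z ^ 2)⁻¹‖ ≤ C * Real.exp (2 * Real.pi * z.im) := by
  obtain ⟨C, hC, h⟩ := ModularForm.exp_isBigO_discriminant.exists_pos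
  have h := (UpperHalfPlane.atImInfty_mem _).mp h.bound
  obtain ⟨A, hA⟩ := h
  refine ⟨max A 1, C / 1728, le_max_right _ _, by positivity, fun z hz => ?_⟩
  have hz0 : 0 < z.im := by linarith [le_max_right A 1]
  have := hA ⟨z, hz0⟩ ((le_max_left _ _).trans hz)
  simp only [Set.mem_ofPred_eq, Real.norm_eq_abs, Real.abs_exp] at this
  change Real.exp (-2 * Real.pi * z.im) ≤ _ at this
  have hD := aux_Delta ⟨z, hz0⟩
  change E4 z ^ 3 - E6 z ^ 2 = _ at hD
  have hn := aux_ne z hz0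
  have hn2 : 0 < ‖ModularForm.discriminant ⟨z, hz0⟩‖ :=
    norm_pos_iff.mpr (ModularForm.discriminant_ne_zero _)
  rw [hD, norm_inv, norm_mul]
  have e : Real.exp (2 * Real.pi * z.im) = (Real.exp (-2 * Real.pi * z.im))⁻¹ := by
    rw [← Real.exp_neg]; ring_nf
  rw [e]
  have hp := Real.exp_pos (-2 * Real.pi * z.im)
  generalize Real.exp (-2 * Real.pi * z.im) = x at *
  generalize ‖ModularForm.discriminant ⟨z, hz0⟩‖ = y at *
  rw [← div_eq_mul_inv, le_div_iff₀ hp, Complex.norm_ofNat, inv_mul_le_iff₀ (by positivity)]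
  linarith

lemma all_bounds : ∃ A C : ℝ, 1 ≤ A ∧ 0 ≤ C ∧ ∀ z : ℂ, A ≤ z.im →
    ‖(E4 z ^ 3 - E6 z ^ 2)⁻¹‖ ≤ C * Real.exp (2 * Real.pi * z.im) ∧
    ‖E2 z * E4 z - E6 z‖ ≤ C * Real.exp (-2 * Real.pi * z.im) ∧ ‖E4 z‖ ≤ C := by
  obtain ⟨A, C, hA, hC, h⟩ := disc_bound
  obtain ⟨C1, hC1, h1⟩ := sum_bound 1
  obtain ⟨C3, hC3, h3⟩ := sum_bound 3
  obtain ⟨C5, hC5, h5⟩ := sum_bound 5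
  set K := 24 * C1 + 240 * C3 + 24 * C1 * (240 * C3) + 504 * C5
  have hK : 0 ≤ K := by positivity
  refine ⟨A, C + K + (1 + 240 * C3), hA, by positivity, fun z hz => ?_⟩
  specialize h z hz
  specialize h1 z (hA.trans hz)
  specialize h3 z (hA.trans hz)
  specialize h5 z (hA.trans hz)
  have hx0 := Real.exp_pos (-2 * Real.pi * z.im)
  have hx1 : Real.exp (-2 * Real.pi * z.im) ≤ 1 := by
    rw [Real.exp_le_one_iff]; nlinarith [Real.pi_pos]
  rw [E2, E4, E6] at *
  generalize (∑' n : ℕ+, ((ArithmeticFunction.sigma 1 n : ℕ) : ℂ) *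
      Complex.exp (2 * (Real.pi : ℂ) * Complex.I * n * z)) = s1 at *
  generalize (∑' n : ℕ+, ((ArithmeticFunction.sigma 3 n : ℕ) : ℂ) *
      Complex.exp (2 * (Real.pi : ℂ) * Complex.I * n * z)) = s3 at *
  generalize (∑' n : ℕ+, ((ArithmeticFunction.sigma 5 n : ℕ) : ℂ) *
      Complex.exp (2 * (Real.pi : ℂ) * Complex.I * n * z)) = s5 at *
  generalize Real.exp (-2 * Real.pi * z.im) = x at *
  refine ⟨h.trans ?_, ?_, ?_⟩
  · gcongr; nlinarith
  · have e : (1 - 24 * s1) * (1 + 240 * s3) - (1 - 504 * s5) =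
        -(24 * s1) + 240 * s3 + -(24 * s1 * (240 * s3)) + 504 * s5 := by ring
    have n1 : ‖(24 * s1)‖ ≤ 24 * C1 * x := by rw [norm_mul, Complex.norm_ofNat]; linarith
    have n3 : ‖(240 * s3)‖ ≤ 240 * C3 * x := by rw [norm_mul, Complex.norm_ofNat]; linarith
    have n3' : ‖(240 * s3)‖ ≤ 240 * C3 := n3.trans (by nlinarith)
    have n5 : ‖(504 * s5)‖ ≤ 504 * C5 * x := by rw [norm_mul, Complex.norm_ofNat]; linarith
    have n13 : ‖24 * s1 * (240 * s3)‖ ≤ (24 * C1 * x) * (240 * C3) := by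
      rw [norm_mul]; gcongr
    rw [e]
    calc _ ≤ 24 * C1 * x + 240 * C3 * x + (24 * C1 * x) * (240 * C3) + 504 * C5 * x := by
          refine (norm_add_le _ _).trans (add_le_add ?_ n5)
          refine (norm_add_le _ _).trans (add_le_add ?_ (by rwa [norm_neg]))
          refine (norm_add_le _ _).trans (add_le_add (by rwa [norm_neg]) n3)
      _ = K * x := by ring
      _ ≤ _ := by gcongr; nlinarith
  · refine (norm_add_le _ _).trans ?_
    rw [norm_mul, Complex.norm_ofNat, norm_one]
    nlinarith

lemma phi0_bound : ∃ A C : ℝ, 1 ≤ A ∧ 0 ≤ C ∧ ∀ z : ℂ, A ≤ z.im → ‖phi0 z‖ ≤ C := by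
  obtain ⟨A, C, hA, hC, h⟩ := all_bounds
  refine ⟨A, 1728 * C ^ 3, hA, by positivity, fun z hz => ?_⟩
  obtain ⟨h1, h2, h3⟩ := h z hz
  rw [phi0_eq z (by linarith), div_eq_mul_inv, norm_mul, norm_mul, norm_pow, Complex.norm_ofNat]
  calc _ ≤ 1728 * (C * Real.exp (-2 * Real.pi * z.im)) ^ 2 *
        (C * Real.exp (2 * Real.pi * z.im)) := by gcongr
    _ = 1728 * C ^ 3 * (Real.exp (-2 * Real.pi * z.im) *
        (Real.exp (-2 * Real.pi * z.im) * Real.exp (2 * Real.pi * z.im))) := by ring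
    _ = 1728 * C ^ 3 * Real.exp (-2 * Real.pi * z.im) := by
        rw [← Real.exp_add]; ring_nf; simp
    _ ≤ 1728 * C ^ 3 * 1 := by
        gcongr; rw [Real.exp_le_one_iff]; nlinarith [Real.pi_pos]
    _ = _ := mul_one _

lemma phi0_S_bound : ∃ A C : ℝ, 1 ≤ A ∧ 0 ≤ C ∧ ∀ z : ℂ, A ≤ z.im → |z.re| ≤ 1 →
    ‖phi0 (-1 / z) * z ^ 2‖ ≤ C * (z.im + 2) ^ 2 * Real.exp (2 * Real.pi * z.im) := by
  obtain ⟨A, C, hA, hC, h⟩ := all_bounds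
  set c := ‖(6 / (Real.pi * I) : ℂ)‖ with hc
  refine ⟨A, 1728 * (C * (1 + c)) ^ 2 * C, hA, by positivity, fun z hz hre => ?_⟩
  obtain ⟨h1, h2, h3⟩ := h z hz
  rw [phi0_S z (by linarith), div_eq_mul_inv, norm_mul, norm_mul, norm_pow, Complex.norm_ofNat]
  have hx1 : Real.exp (-2 * Real.pi * z.im) ≤ 1 := by
    rw [Real.exp_le_one_iff]; nlinarith [Real.pi_pos]
  have hzn : ‖z‖ ≤ z.im + 2 := by
    have := Complex.norm_le_abs_re_add_abs_im z
    rw [abs_of_pos (show 0 < z.im by linarith)] at this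
    linarith
  have h2' : ‖E2 z * E4 z - E6 z‖ ≤ C := h2.trans (by nlinarith)
  have : ‖z * (E2 z * E4 z - E6 z) + 6 / (Real.pi * I) * E4 z‖ ≤ C * (1 + c) * (z.im + 2) := by
    refine (norm_add_le _ _).trans ?_
    rw [norm_mul, norm_mul, ← hc]
    have hc0 : 0 ≤ c := norm_nonneg _
    calc _ ≤ (z.im + 2) * C + c * C := by gcongr; linarith
      _ ≤ (z.im + 2) * C + c * C * (z.im + 2) := by
        have : 0 ≤ c * C := by positivity
        nlinarith
      _ = _ := by ring
  calc _ ≤ 1728 * (C * (1 + c) * (z.im + 2)) ^ 2 * (C * Real.exp (2 * Real.pi * z.im)) := by gcongr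
    _ = _ := by ring

end bounds

section contour
open Complex Filter Topology Set

lemma ftc_line {P H : ℂ → ℂ} (hP : ∀ z : ℂ, 0 < z.im → HasDerivAt P (H z) z)
    (hH : ContinuousOn H {z | 0 < z.im}) (p v : ℂ) (a b : ℝ)
    (hpos : ∀ t ∈ uIcc a b, 0 < (p + (t : ℂ) * v).im) :
    v * ∫ t in a..b, H (p + (t : ℂ) * v) = P (p + b * v) - P (p + a * v) := by
  rw [← intervalIntegral.integral_const_mul]
  have := intervalIntegral.integral_eq_sub_of_hasDerivAt (a := a) (b := b)
    (f := fun t : ℝ => P (p + (t : ℂ) * v)) (f' := fun t : ℝ => v * H (p + (t : ℂ) * v)) ?_ ?_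
  · simpa using this
  · intro t ht
    have h1 : HasDerivAt (fun t : ℝ => p + (t : ℂ) * v) v t := by
      simpa using ((Complex.ofRealCLM.hasDerivAt (x := t)).mul_const v).const_add p
    have := (hP _ (hpos t ht)).comp_of_eq t h1 rfl
    rw [mul_comm]
    exact this
  · apply ContinuousOn.intervalIntegrable
    refine continuousOn_const.mul (hH.comp (by fun_prop) ?_)
    intro t ht
    exact hpos t ht

/-- vertical integrability -/
lemma vert_int {H : ℂ → ℂ} (hH : ContinuousOn H {z | 0 < z.im}) {T C c : ℝ} (hc : 0 < c)
    (hinf : ∀ z : ℂ, T ≤ z.im → |z.re| ≤ 1 → ‖H z‖ ≤ C * Real.exp (-c * z.im))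
    (s : ℝ) (hs : |s| ≤ 1) (a : ℝ) (ha : 0 < a) :
    IntegrableOn (fun t : ℝ => H (s + (t : ℂ) * I)) (Ioi a) := by
  have hcont : ContinuousOn (fun t : ℝ => H (s + (t : ℂ) * I)) (Ici a) := by
    refine hH.comp (by fun_prop) ?_
    intro t ht
    have : a ≤ t := ht
    simpa using ha.trans_le this
  refine (integrable_norm_iff ((hcont.mono Ioi_subset_Ici_self).aestronglyMeasurable
    measurableSet_Ioi)).mp ?_
  refine integrable_of_isBigO_exp_neg hc hcont.norm ?_
  · refine Asymptotics.IsBigO.of_bound C ?_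
    filter_upwards [eventually_ge_atTop T] with t ht
    have := hinf (s + (t : ℂ) * I) (by simpa using ht) (by simpa using hs)
    simpa using this

lemma sector_int {H : ℂ → ℂ} (hH : ContinuousOn H {z | 0 < z.im}) {δ M : ℝ} (hδ : 0 < δ)
    (h0 : ∀ z : ℂ, 0 < z.im → z.im ≤ δ → |z.re| ≤ z.im → ‖H z‖ ≤ M)
    (s : ℝ) (hs : |s| ≤ 1) :
    IntegrableOn (fun t : ℝ => H ((t : ℂ) * (s + I))) (Ioc 0 1) := by
  have hcont : ContinuousOn (fun t : ℝ => H ((t : ℂ) * (s + I))) (Ioi 0) := by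
    refine hH.comp (by fun_prop) ?_
    intro t ht
    simpa using ht
  have h1 : IntegrableOn (fun t : ℝ => H ((t : ℂ) * (s + I))) (Ioc 0 δ) := by
    refine IntegrableOn.of_bound (C := M) (by simp) ?_ ?_
    · exact (hcont.mono Ioc_subset_Ioi_self).aestronglyMeasurable measurableSet_Ioc
    · refine (ae_restrict_iff' measurableSet_Ioc).mpr (Eventually.of_forall fun t ht => ?_)
      refine h0 _ (by simpa using ht.1) (by simpa using ht.2) ?_
      have := ht.1
      simp [abs_mul, abs_of_pos this]
      nlinarith
  have h2 : IntegrableOn (fun t : ℝ => H ((t : ℂ) * (s + I))) (Icc δ 1) := by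
    refine (hcont.mono ?_).integrableOn_Icc
    intro t ht
    exact hδ.trans_le ht.1
  refine (h1.union h2).mono_set ?_
  intro t ht
  rcases le_total t δ with h | h
  · exact Or.inl ⟨ht.1, h⟩
  · exact Or.inr ⟨h, ht.2⟩

lemma tendsto_int_zero {f : ℝ → ℂ} (hf : IntegrableOn f (Ioc 0 1)) :
    Tendsto (fun ε : ℝ => ∫ t in ε..1, f t) (𝓝[>] 0) (𝓝 (∫ t in (0:ℝ)..1, f t)) := by
  have h : IntegrableOn f (uIcc 0 1) := by
    rw [uIcc_of_le zero_le_one]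
    exact (integrableOn_Icc_iff_integrableOn_Ioc (by simp)).mpr hf
  have := intervalIntegral.continuousOn_primitive_interval_left h 0 (by simp)
  refine this.tendsto.mono_left ?_
  rw [uIcc_of_le zero_le_one, nhdsWithin_Icc_eq_nhdsGE zero_lt_one]
  exact nhdsWithin_mono _ Ioi_subset_Ici_self

lemma contour {H : ℂ → ℂ} (hd : DifferentiableOn ℂ H {z | 0 < z.im}) {δ M T C c : ℝ}
    (hδ : 0 < δ) (hc : 0 < c)
    (h0 : ∀ z : ℂ, 0 < z.im → z.im ≤ δ → |z.re| ≤ z.im → ‖H z‖ ≤ M)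
    (hinf : ∀ z : ℂ, T ≤ z.im → |z.re| ≤ 1 → ‖H z‖ ≤ C * Real.exp (-c * z.im))
    (s : ℝ) (hs : |s| ≤ 1) :
    (s + I) * (∫ t in (0:ℝ)..1, H ((t : ℂ) * (s + I))) + I * (∫ t in Ioi (1:ℝ), H (s + (t : ℂ) * I))
     = I * (∫ t in (0:ℝ)..1, H ((t : ℂ) * I)) + I * (∫ t in Ioi (1:ℝ), H ((t : ℂ) * I)) := by
  have hH := hd.continuousOn
  have hopen : IsOpen {z : ℂ | 0 < z.im} := isOpen_lt continuous_const Complex.continuous_im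
  have hconv : Convex ℝ {z : ℂ | 0 < z.im} := convex_halfSpace_im_gt 0
  obtain ⟨P, hP⟩ := hconv.exists_forall_hasDerivWithinAt hd
  replace hP : ∀ z : ℂ, 0 < z.im → HasDerivAt P (H z) z :=
    fun z hz => (hP z hz).hasDerivAt (hopen.mem_nhds hz)
  -- upper part
  have up : ∀ s : ℝ, |s| ≤ 1 → Tendsto (fun T' : ℝ => P (s + T' * I) - P (s + I)) atTop
      (𝓝 (I * (∫ t in Ioi (1:ℝ), H (s + (t : ℂ) * I)))) := by
    intro s hs
    have := (intervalIntegral_tendsto_integral_Ioi 1 (vert_int hH hc hinf s hs 1 one_pos)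
      tendsto_id).const_mul I
    refine this.congr' ?_
    filter_upwards [eventually_ge_atTop 1] with T' hT'
    rw [ftc_line hP hH]
    · simp
    · intro t ht
      simp only [id] at ht
      rw [uIcc_of_le hT'] at ht
      simpa using zero_lt_one.trans_le ht.1
  have down : ∀ s : ℝ, |s| ≤ 1 → Tendsto (fun ε : ℝ => P (s + I) - P (ε * (s + I))) (𝓝[>] 0)
      (𝓝 ((s + I) * (∫ t in (0:ℝ)..1, H ((t : ℂ) * (s + I))))) := by
    intro s hs
    have := (tendsto_int_zero (sector_int hH hδ h0 s hs)).const_mul ((s : ℂ) + I)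
    refine this.congr' ?_
    filter_upwards [Ioo_mem_nhdsGT one_pos] with ε hε
    have := ftc_line hP hH 0 (s + I) ε 1 ?_
    · simpa using this
    · intro t ht
      rw [uIcc_of_le hε.2.le] at ht
      simpa using hε.1.trans_le ht.1
  have up1 := up s hs
  have up0 := up 0 (by simp)
  have dn1 := down s hs
  have dn0 := down 0 (by simp)
  simp only [Complex.ofReal_zero, zero_add] at up0 dn0
  -- horizontal pieces
  have htop : Tendsto (fun T' : ℝ => P (s + T' * I) - P (T' * I)) atTop (𝓝 0) := by
    have hb : Tendsto (fun T' : ℝ => C * Real.exp (-c * T')) atTop (𝓝 0) := by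
      have : Tendsto (fun T' : ℝ => Real.exp (-c * T')) atTop (𝓝 0) :=
        Real.tendsto_exp_atBot.comp (tendsto_id.const_mul_atTop_of_neg (by linarith))
      simpa using this.const_mul C
    refine squeeze_zero_norm' ?_ hb
    filter_upwards [eventually_ge_atTop (max T 1)] with T' hT'
    have hT1 : T ≤ T' := (le_max_left _ _).trans hT'
    have hT2 : 1 ≤ T' := (le_max_right _ _).trans hT'
    have e := ftc_line hP hH (T' * I) s 0 1 (by intro t _; simp; linarith)
    have e2 : P (s + T' * I) - P (T' * I) = s * ∫ t in (0:ℝ)..1, H (T' * I + (t : ℂ) * s) := by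
      rw [e]; simp [add_comm]
    rw [e2, norm_mul, Complex.norm_real]
    have := intervalIntegral.norm_integral_le_of_norm_le_const (a := 0) (b := 1)
      (f := fun t : ℝ => H (T' * I + (t : ℂ) * s)) (C := C * Real.exp (-c * T')) ?_
    · simp only [sub_zero, abs_one, mul_one] at this
      have h3 : ‖s‖ ≤ 1 := hs
      nlinarith [norm_nonneg (∫ t in (0:ℝ)..1, H (T' * I + (t : ℂ) * s))]
    · intro t ht
      rw [uIoc_of_le zero_le_one] at ht
      have h3 := hinf (T' * I + (t : ℂ) * s) (by simpa using hT1) (by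
        simp [abs_mul, abs_of_pos ht.1]; nlinarith [ht.1, ht.2, abs_nonneg s])
      simpa using h3
  have hbot : Tendsto (fun ε : ℝ => P (ε * (s + I)) - P (ε * I)) (𝓝[>] 0) (𝓝 0) := by
    have hb : Tendsto (fun ε : ℝ => ε * M) (𝓝[>] 0) (𝓝 0) := by
      have : Tendsto (fun ε : ℝ => ε * M) (𝓝 0) (𝓝 (0 * M)) := tendsto_id.mul_const M
      rw [zero_mul] at this
      exact this.mono_left nhdsWithin_le_nhds
    refine squeeze_zero_norm' ?_ hb
    filter_upwards [Ioo_mem_nhdsGT hδ] with ε hε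
    have hε0 := hε.1
    have e := ftc_line hP hH (ε * I) (ε * s) 0 1 (by intro t _; simpa using hε.1)
    have e2 : P (ε * (s + I)) - P (ε * I) =
        (ε * s) * ∫ t in (0:ℝ)..1, H (ε * I + (t : ℂ) * (ε * s)) := by
      rw [e]; simp [add_comm, mul_add]
    rw [e2, norm_mul, norm_mul, Complex.norm_real, Complex.norm_real]
    have := intervalIntegral.norm_integral_le_of_norm_le_const (a := 0) (b := 1)
      (f := fun t : ℝ => H (ε * I + (t : ℂ) * (ε * s))) (C := M) ?_
    · simp only [sub_zero, abs_one, mul_one] at this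
      have h3 : ‖s‖ ≤ 1 := hs
      rw [Real.norm_eq_abs, abs_of_pos hε0]
      have h4 : ε * ‖s‖ ≤ ε := by nlinarith
      calc _ ≤ ε * ‖∫ t in (0:ℝ)..1, H (ε * I + (t : ℂ) * (ε * s))‖ := by gcongr
        _ ≤ _ := by gcongr
    · intro t ht
      rw [uIoc_of_le zero_le_one] at ht
      refine h0 _ (by simpa using hε0) (by simpa using hε.2.le) ?_
      simp [abs_mul, abs_of_pos ht.1, abs_of_pos hε0]
      have : ε * |s| ≤ ε := by nlinarith
      nlinarith [ht.1, ht.2, abs_nonneg s, mul_nonneg hε0.le (abs_nonneg s)]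
  have U := tendsto_nhds_unique (((up1.sub up0).sub htop)) (tendsto_const_nhds.congr
    (f₁ := fun _ => P I - P (s + I)) (fun T' => by ring))
  have D := tendsto_nhds_unique (((dn1.sub dn0).add hbot)) (tendsto_const_nhds.congr
    (f₁ := fun _ => P (s + I) - P I) (fun T' => by ring))
  linear_combination U + D

end contour

section final
open Complex Filter Topology Set

noncomputable def hker (r : ℝ) (z : ℂ) : ℂ :=
  phi0 (-1/z) * z ^ 2 * Complex.exp ((Real.pi : ℂ) * Complex.I * (r : ℂ) ^ 2 * z)

lemma im_neg_inv (z : ℂ) : (-1 / z).im = z.im / Complex.normSq z := by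
  simp [neg_div, Complex.inv_im]

lemma hker_diff (r : ℝ) : DifferentiableOn ℂ (hker r) {z | 0 < z.im} := by
  have h1 : DifferentiableOn ℂ (fun z : ℂ => -1 / z) {z | 0 < z.im} := by
    intro z hz
    have : z ≠ 0 := by rintro rfl; simp at hz
    exact ((differentiableAt_const _).div differentiableAt_id this).differentiableWithinAt
  have h2 : DifferentiableOn ℂ (fun z : ℂ => phi0 (-1 / z)) {z | 0 < z.im} := by
    refine diff_phi0.comp h1 ?_
    intro z hz
    have h0 : z ≠ 0 := by rintro rfl; simp at hz
    change 0 < (-1 / z).im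
    rw [im_neg_inv]
    exact div_pos hz (Complex.normSq_pos.mpr h0)
  unfold hker
  refine (h2.mul (by fun_prop)).mul (by fun_prop)

lemma norm_ker (r : ℝ) (z : ℂ) : ‖Complex.exp ((Real.pi : ℂ) * Complex.I * (r : ℂ) ^ 2 * z)‖ =
    Real.exp (-(Real.pi * r ^ 2 * z.im)) := by
  rw [Complex.norm_exp]
  congr 1
  rw [show (Real.pi : ℂ) * Complex.I * (r : ℂ) ^ 2 * z = ((Real.pi * r ^ 2 : ℝ) : ℂ) * (I * z) by
    push_cast; ring, Complex.re_ofReal_mul]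
  simp

lemma hker_zero (r : ℝ) : ∃ δ M : ℝ, 0 < δ ∧
    ∀ z : ℂ, 0 < z.im → z.im ≤ δ → |z.re| ≤ z.im → ‖hker r z‖ ≤ M := by
  obtain ⟨A, C, hA, hC, h⟩ := phi0_bound
  refine ⟨1 / (2 * A), C * 2 ^ 2 * 1, by positivity, fun z hz hd hre => ?_⟩
  have h0 : z ≠ 0 := by rintro rfl; simp at hz
  have hA0 : 0 < A := by linarith
  have hd' : z.im * (2 * A) ≤ 1 := (le_div_iff₀ (by positivity)).mp hd
  have hz1 : z.im ≤ 1 := by nlinarith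
  have hn : ‖z‖ ≤ 2 := by
    have := Complex.norm_le_abs_re_add_abs_im z
    rw [abs_of_pos hz] at this
    linarith
  have hA2 : A ≤ (-1 / z).im := by
    rw [im_neg_inv, le_div_iff₀ (Complex.normSq_pos.mpr h0), Complex.normSq_apply]
    have : z.re * z.re ≤ z.im * z.im := by
      rw [← abs_mul_abs_self z.re]
      exact mul_le_mul hre hre (abs_nonneg _) hz.le
    nlinarith [mul_le_mul_of_nonneg_left this hA0.le]
  rw [hker, norm_mul, norm_mul, norm_pow, norm_ker]
  have he : Real.exp (-(Real.pi * r ^ 2 * z.im)) ≤ 1 := by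
    rw [Real.exp_le_one_iff]
    have := Real.pi_pos
    have : 0 ≤ Real.pi * r ^ 2 * z.im := by positivity
    linarith
  have := h _ hA2
  gcongr

lemma hker_inf (r : ℝ) (hr : 2 < r ^ 2) : ∃ T C c : ℝ, 0 < c ∧
    ∀ z : ℂ, T ≤ z.im → |z.re| ≤ 1 → ‖hker r z‖ ≤ C * Real.exp (-c * z.im) := by
  obtain ⟨A, C, hA, hC, h⟩ := phi0_S_bound
  set c := Real.pi * (r ^ 2 - 2) / 2 with hc
  have hc0 : 0 < c := by
    have := Real.pi_pos
    have h2 : 0 < r ^ 2 - 2 := by linarith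
    positivity
  refine ⟨A, C * (2 / c ^ 2 * Real.exp (2 * c)), c, hc0, fun z hz hre => ?_⟩
  have hb := h z hz hre
  have hx : 0 ≤ c * (z.im + 2) := by
    have : 0 ≤ z.im + 2 := by linarith
    positivity
  have hq : (z.im + 2) ^ 2 ≤ 2 / c ^ 2 * Real.exp (c * (z.im + 2)) := by
    have := Real.pow_div_factorial_le_exp _ hx 2
    rw [div_mul_eq_mul_div, le_div_iff₀ (by positivity)]
    norm_num [Nat.factorial] at this
    nlinarith
  rw [hker, norm_mul, norm_ker]
  calc _ ≤ (C * (2 / c ^ 2 * Real.exp (c * (z.im + 2))) * Real.exp (2 * Real.pi * z.im)) *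
        Real.exp (-(Real.pi * r ^ 2 * z.im)) := by
        gcongr
        refine hb.trans ?_
        gcongr
    _ = C * (2 / c ^ 2) * (Real.exp (c * (z.im + 2)) * Real.exp (2 * Real.pi * z.im) *
        Real.exp (-(Real.pi * r ^ 2 * z.im))) := by ring
    _ = C * (2 / c ^ 2) * (Real.exp (2 * c) * Real.exp (-c * z.im)) := by
        rw [← Real.exp_add, ← Real.exp_add, ← Real.exp_add]
        congr 2
        rw [hc]; ring
    _ = _ := by ring

lemma hker_shift (r : ℝ) (z : ℂ) (hz : 0 < z.im) :
    2 * (phi0 z * Complex.exp ((Real.pi:ℂ) * Complex.I * (r:ℂ)^2 * z)) =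
    Complex.exp (-((Real.pi:ℂ) * Complex.I * (r:ℂ)^2)) * hker r (z + 1) +
    Complex.exp ((Real.pi:ℂ) * Complex.I * (r:ℂ)^2) * hker r (z - 1) - 2 * hker r z := by
  have h := phi0_second_diff z hz
  set a := (Real.pi:ℂ) * Complex.I * (r:ℂ)^2
  have e1 : Complex.exp (a * z) = Complex.exp (-a) * Complex.exp (a * (z + 1)) := by
    rw [← Complex.exp_add]; congr 1; ring
  have e2 : Complex.exp (a * z) = Complex.exp a * Complex.exp (a * (z - 1)) := by
    rw [← Complex.exp_add]; congr 1; ring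
  have k1 : Complex.exp (-a) * hker r (z + 1) =
      phi0 (-1 / (z + 1)) * (z + 1) ^ 2 * Complex.exp (a * z) := by
    rw [hker, e1]; ring
  have k2 : Complex.exp a * hker r (z - 1) =
      phi0 (-1 / (z - 1)) * (z - 1) ^ 2 * Complex.exp (a * z) := by
    rw [hker, e2]; ring
  rw [k1, k2, hker]
  linear_combination (-Complex.exp (a * z)) * h

lemma main_aux (r : ℝ) (hr : 2 < r ^ 2) :
    IntegrableOn (fun t : ℝ => hker r ((t : ℂ) * I)) (Ioi 0) ∧
    aRad r = -4 * ((Real.sin (Real.pi * r ^ 2 / 2) : ℂ)) ^ 2 *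
      (I * ∫ t in Ioi (0 : ℝ), hker r ((t : ℂ) * I)) := by
  obtain ⟨δ, M, hδ, h0⟩ := hker_zero r
  obtain ⟨T, C, c, hc, hinf⟩ := hker_inf r hr
  have hd := hker_diff r
  have hv := vert_int hd.continuousOn hc hinf
  have hv1 := hv 1 (by simp) 1 one_pos
  have hvm := hv (-1) (by simp) 1 one_pos
  have hv0 := hv 0 (by simp) 1 one_pos
  have hs0 := sector_int hd.continuousOn hδ h0 0 (by simp)
  have c1 := contour hd hδ hc h0 hinf 1 (by simp)
  have cm := contour hd hδ hc h0 hinf (-1) (by simp)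
  simp only [Complex.ofReal_zero, Complex.ofReal_one, Complex.ofReal_neg, zero_add] at *
  have hu : Ioc (0:ℝ) 1 ∪ Ioi 1 = Ioi 0 := Ioc_union_Ioi_eq_Ioi zero_le_one
  have hint : IntegrableOn (fun t : ℝ => hker r ((t : ℂ) * I)) (Ioi 0) := by
    rw [← hu]; exact hs0.union hv0
  have hsplit : ∫ t in Ioi (0 : ℝ), hker r ((t : ℂ) * I) =
      (∫ t in (0:ℝ)..1, hker r ((t : ℂ) * I)) + ∫ t in Ioi (1 : ℝ), hker r ((t : ℂ) * I) := by
    rw [← hu, setIntegral_union (by simp) measurableSet_Ioi hs0 hv0,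
      intervalIntegral.integral_of_le zero_le_one]
  refine ⟨hint, ?_⟩
  rw [hsplit]
  set a := (Real.pi:ℂ) * Complex.I * (r:ℂ)^2 with ha
  have t1 : segInt (-1) Complex.I
      (fun z => phi0 (-1/(z+1)) * (z+1)^2 * Complex.exp (a * z)) =
      Complex.exp (-a) * ((1 + I) * ∫ t in (0:ℝ)..1, hker r ((t : ℂ) * (1 + I))) := by
    rw [segInt, show (I - -1 : ℂ) = 1 + I by ring, mul_left_comm (cexp (-a)),
      ← intervalIntegral.integral_const_mul (cexp (-a))]
    congr 2
    funext t
    rw [hker, show (-1 + (t : ℂ) * (1 + I) + 1) = t * (1 + I) by ring, mul_left_comm (cexp (-a)),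
      ← Complex.exp_add]
    congr 2
    ring
  have t2 : segInt 1 Complex.I
      (fun z => phi0 (-1/(z-1)) * (z-1)^2 * Complex.exp (a * z)) =
      Complex.exp a * ((-1 + I) * ∫ t in (0:ℝ)..1, hker r ((t : ℂ) * (-1 + I))) := by
    rw [segInt, show (I - 1 : ℂ) = -1 + I by ring, mul_left_comm (cexp a),
      ← intervalIntegral.integral_const_mul (cexp a)]
    congr 2
    funext t
    rw [hker, show (1 + (t : ℂ) * (-1 + I) - 1) = t * (-1 + I) by ring, mul_left_comm (cexp a),
      ← Complex.exp_add]
    congr 2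
    ring
  have t3 : segInt 0 Complex.I
      (fun z => phi0 (-1/z) * z^2 * Complex.exp (a * z)) =
      I * ∫ t in (0:ℝ)..1, hker r ((t : ℂ) * I) := by
    rw [segInt]
    simp only [sub_zero, zero_add]
    rfl
  have t4 : 2 * rayIntFrom 1 (fun z => phi0 z * Complex.exp (a * z)) =
      Complex.exp (-a) * (I * ∫ t in Ioi (1:ℝ), hker r (1 + (t : ℂ) * I)) +
      Complex.exp a * (I * ∫ t in Ioi (1:ℝ), hker r (-1 + (t : ℂ) * I)) -
      2 * (I * ∫ t in Ioi (1:ℝ), hker r ((t : ℂ) * I)) := by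
    have : ∫ t in Ioi (1:ℝ), 2 * (phi0 (I * t) * Complex.exp (a * (I * t))) =
        ∫ t in Ioi (1:ℝ), (Complex.exp (-a) * hker r (1 + (t : ℂ) * I) +
          Complex.exp a * hker r (-1 + (t : ℂ) * I) - 2 * hker r ((t : ℂ) * I)) := by
      refine setIntegral_congr_fun measurableSet_Ioi fun t ht => ?_
      have ht1 : (1:ℝ) < t := ht
      have := hker_shift r (I * t) (by simp; linarith)
      rw [this, show I * (t : ℂ) + 1 = 1 + t * I by ring, show I * (t : ℂ) - 1 = -1 + t * I by ring,
        mul_comm I (t : ℂ)]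
    rw [rayIntFrom, mul_left_comm, ← integral_const_mul, this, integral_sub, integral_add,
      integral_const_mul, integral_const_mul, integral_const_mul]
    · ring
    · exact hv1.const_mul _
    · exact hvm.const_mul _
    · exact (hv1.const_mul _).add (hvm.const_mul _)
    · exact hv0.const_mul _
  have hsin : -4 * ((Real.sin (Real.pi * r ^ 2 / 2) : ℂ)) ^ 2 =
      Complex.exp a + Complex.exp (-a) - 2 := by
    have e1 : Complex.exp a = Complex.exp (a / 2) ^ 2 := by
      rw [← Complex.exp_nat_mul]; congr 1; push_cast; ring
    have e2 : Complex.exp (-a) = Complex.exp (-(a / 2)) ^ 2 := by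
      rw [← Complex.exp_nat_mul]; congr 1; push_cast; ring
    have e3 : Complex.exp (a / 2) * Complex.exp (-(a / 2)) = 1 := by
      rw [← Complex.exp_add]; simp
    rw [Complex.ofReal_sin, Complex.sin, e1, e2]
    push_cast
    rw [show (-(Real.pi * (r:ℂ) ^ 2 / 2) * I) = -(a / 2) by rw [ha]; ring,
      show ((Real.pi * (r:ℂ) ^ 2 / 2) * I) = (a / 2) by rw [ha]; ring]
    linear_combination (-2 : ℂ) * e3 -
      (Complex.exp (-(a / 2)) - Complex.exp (a / 2)) ^ 2 * Complex.I_sq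
  rw [aRad, t1, t2, t3, t4, hsin]
  linear_combination cexp (-a) * c1 + cexp a * cm

end final

/-- **Proposition 2.** For `r > √2`,
`a(r) = −4 sin²(πr²/2) ∫_{0}^{i∞} φ₀(−1/z) z² e^{πir²z} dz`; equivalently
`a(r) = 4i sin²(πr²/2) ∫_{0}^{∞} φ₀(i/t) t² e^{−πr²t} dt`, the integral converging
absolutely. -/
theorem aRad_double_zeroes (r : ℝ) (hr : Real.sqrt 2 < r) :
    IntegrableOn
      (fun t : ℝ => phi0 (Complex.I / (t : ℂ)) * (t : ℂ) ^ 2 *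
        Complex.exp (-(Real.pi : ℂ) * (r : ℂ) ^ 2 * (t : ℂ))) (Set.Ioi 0) ∧
    aRad r = -4 * ((Real.sin (Real.pi * r ^ 2 / 2) : ℂ)) ^ 2 *
      rayIntFrom 0 (fun z => phi0 (-1/z) * z ^ 2 *
        Complex.exp ((Real.pi : ℂ) * Complex.I * (r : ℂ) ^ 2 * z)) ∧
    aRad r = 4 * Complex.I * ((Real.sin (Real.pi * r ^ 2 / 2) : ℂ)) ^ 2 *
      ∫ t in Set.Ioi (0 : ℝ), phi0 (Complex.I / (t : ℂ)) * (t : ℂ) ^ 2 *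
        Complex.exp (-(Real.pi : ℂ) * (r : ℂ) ^ 2 * (t : ℂ)) := by
  have hr2 : 2 < r ^ 2 := by
    have h := Real.sq_sqrt (show (0:ℝ) ≤ 2 by norm_num)
    have h0 := Real.sqrt_nonneg 2
    nlinarith
  obtain ⟨h1, h2⟩ := main_aux r hr2
  have key : ∀ t : ℝ, phi0 (Complex.I / (t : ℂ)) * (t : ℂ) ^ 2 *
        Complex.exp (-(Real.pi : ℂ) * (r : ℂ) ^ 2 * (t : ℂ)) = -hker r ((t : ℂ) * Complex.I) := by
    intro t
    have e1 : -1 / ((t : ℂ) * Complex.I) = Complex.I / t := by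
      rw [← div_div, div_eq_mul_inv _ Complex.I, Complex.inv_I]; ring
    have e2 : (Real.pi : ℂ) * Complex.I * (r : ℂ) ^ 2 * ((t : ℂ) * Complex.I) =
        -(Real.pi : ℂ) * (r : ℂ) ^ 2 * (t : ℂ) := by
      linear_combination (Real.pi : ℂ) * (r : ℂ) ^ 2 * t * Complex.I_sq
    rw [hker, e1, e2, mul_pow, Complex.I_sq]
    ring
  refine ⟨?_, ?_, ?_⟩
  · simp only [key]
    exact h1.neg
  · rw [h2, rayIntFrom]
    simp only [mul_comm Complex.I]
    rfl
  · simp only [key]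
    rw [h2, integral_neg]
    ring
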